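/- arXiv:math/0611836 — 2 statements merged into one kernel-verified Lean document; each statement's English description precedes it below -/
import Mathlib

section
/- Let α = log(5/3)/log 4. If f : V* → ℝ has finite energy 𝓔(f,f) = sup_{n≥0} 𝓔_n(f,f) < ∞, then |f(x) − f(y)| ≤ 6 √(𝓔(f,f)) · ‖x−y‖^α for all x, y ∈ V*, and f extends uniquely to a continuous (indeed α-Hölder continuous) function on V. -/
open Set MeasureTheory Filter Topology
open scoped Classical ENNReal NNReal BoundedContinuousFunction

noncomputable section

/-- The plane, with the Euclidean norm. -/
abbrev Pt : Type := EuclideanSpace ℝ (Fin 2)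

/-- The three vertexes of the initial equilateral triangle. -/
def ptA : Fin 3 → Pt
  | 0 => (WithLp.equiv 2 (Fin 2 → ℝ)).symm ![0, 0]
  | 1 => (WithLp.equiv 2 (Fin 2 → ℝ)).symm ![1, 0]
  | 2 => (WithLp.equiv 2 (Fin 2 → ℝ)).symm ![1 / 2, Real.sqrt 3 / 2]

/-- The contraction `fᵢ(z) = (z + aᵢ)/2`. -/
def sgMap (i : Fin 3) (z : Pt) : Pt := (2 : ℝ)⁻¹ • (z + ptA i)

/-- The vertex sets `V_n`. -/
def Vn : ℕ → Finset Pt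
  | 0 => {ptA 0, ptA 1, ptA 2}
  | n + 1 => (Vn n).image (sgMap 0) ∪ (Vn n).image (sgMap 1) ∪ (Vn n).image (sgMap 2)

/-- `V* = ⋃ₙ Vₙ`. -/
def Vstar : Set Pt := ⋃ n, (Vn n : Set Pt)

/-- The Sierpinski gasket `V`, the closure of `V*`. -/
def sg : Set Pt := closure Vstar

lemma Vstar_subset_sg {x : Pt} (hx : x ∈ Vstar) : x ∈ sg :=
  subset_closure hx

lemma Vn_subset_sg {n : ℕ} {x : Pt} (hx : x ∈ Vn n) : x ∈ sg :=
  subset_closure (Set.mem_iUnion.mpr ⟨n, hx⟩)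

/-- `{x,y}` is an edge of the graph `Γₙ`. -/
def isEdge (n : ℕ) (x y : Pt) : Prop := ‖x - y‖ = (2 : ℝ) ^ (-(n : ℤ))

/-- The discrete energy form `𝓔ₙ(u,v) = (5/3)ⁿ Σ_{{x,y}∈Eₙ} (u(y)-u(x))(v(y)-v(x))`;
the sum over unordered pairs is written as half the sum over ordered pairs. -/
def energyBi (n : ℕ) (u v : Pt → ℝ) : ℝ :=
  (5 / 3 : ℝ) ^ n * (1 / 2) *
    ∑ x ∈ Vn n, ∑ y ∈ Vn n, if isEdge n x y then (u y - u x) * (v y - v x) else 0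

/-- The discrete energy `𝓔ₙ(u,u)`. -/
def energy (n : ℕ) (u : Pt → ℝ) : ℝ := energyBi n u u

/-- The discrete Laplacian `Δₙ g(x) = 5ⁿ Σ_{y:{x,y}∈Eₙ} (g(y)-g(x))`. -/
def discLap (n : ℕ) (g : Pt → ℝ) (x : Pt) : ℝ :=
  (5 : ℝ) ^ n * ∑ y ∈ Vn n, if isEdge n x y then g y - g x else 0

/-- A function on `V*` has finite energy if `supₙ 𝓔ₙ(u,u) < ∞`. -/
def FiniteEnergy (u : Pt → ℝ) : Prop := BddAbove (Set.range fun n => energy n u)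

/-- The empirical vertex measure `μₙ`, giving mass `3⁻ⁿ` to each point of `Vₙ`. -/
def empMeas (n : ℕ) : Measure Pt :=
  ((3 : ℝ≥0∞) ^ n)⁻¹ • ∑ x ∈ Vn n, Measure.dirac x

/-- Extension by zero of a continuous function on the gasket. -/
def sgExt (f : C(sg, ℝ)) (x : Pt) : ℝ := if hx : x ∈ sg then f ⟨x, hx⟩ else 0

/-- `h(k)! = h(1)⋯h(k)`, with `h(0)! = 1`. -/
def hfact (h : ℕ → ℝ) (k : ℕ) : ℝ := ∏ i ∈ Finset.range k, h (i + 1)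

/-- The partition function `Z(φ) = Σₖ φᵏ/h(k)!`. -/
def Zfun (h : ℕ → ℝ) (φ : ℝ) : ℝ := ∑' k, φ ^ k / hfact h k

/-- The one-site marginal `p_φ(k) = Z(φ)⁻¹ φᵏ/h(k)!`. -/
def pmarg (h : ℕ → ℝ) (φ : ℝ) (k : ℕ) : ℝ := (Zfun h φ)⁻¹ * φ ^ k / hfact h k

/-- The mean of the one-site marginal `p_φ`. -/
def meanFun (h : ℕ → ℝ) (φ : ℝ) : ℝ := ∑' k : ℕ, (k : ℝ) * pmarg h φ k

/-- The zero-range generator on `Ωₙ = ℕ^{Vₙ}`, summing over ordered pairs `(x,y)`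
with `{x,y} ∈ Eₙ`. -/
def zrGen (n : ℕ) (h : ℕ → ℝ) (F : (↥(Vn n) → ℕ) → ℝ) (η : ↥(Vn n) → ℕ) : ℝ :=
  ∑ x : ↥(Vn n), ∑ y : ↥(Vn n),
    if isEdge n x.1 y.1 then
      h (η x) * (F (Function.update (Function.update η x (η x - 1)) y (η y + 1)) - F η)
    else 0

/-- The lattice point with lattice coordinates `(i,j)` at scale `2⁻ⁿ`. -/
def latP (n : ℕ) (i j : ℤ) : Pt :=
  !₂[((i : ℝ) + j / 2) / 2 ^ n, (Real.sqrt 3 / 2 * j) / 2 ^ n]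

/-- Corner offsets of a cell. -/
def Corner (a b : ℤ) : Prop := (a = 0 ∧ b = 0) ∨ (a = 1 ∧ b = 0) ∨ (a = 0 ∧ b = 1)

/-- Lower left corners of the cells of level `n`. -/
inductive Cell : ℕ → ℤ → ℤ → Prop
  | zero : Cell 0 0 0
  | succ {n : ℕ} {i j a b : ℤ} : Cell n i j → Corner a b → Cell (n + 1) (2 * i + a) (2 * j + b)

lemma latP_double (n : ℕ) (i j : ℤ) : latP (n + 1) (2 * i) (2 * j) = latP n i j := by
  unfold latP
  congr 1
  ext k
  fin_cases k <;> simp <;> field_simp <;> ring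

lemma latP_norm (n : ℕ) (i j k l : ℤ) :
    ‖latP n i j - latP n k l‖ ^ 2 =
      (((i : ℝ) - k) ^ 2 + ((i : ℝ) - k) * ((j : ℝ) - l) + ((j : ℝ) - l) ^ 2) / (2 ^ n) ^ 2 := by
  rw [EuclideanSpace.norm_sq_eq]
  have h3 : Real.sqrt 3 ^ 2 = 3 := Real.sq_sqrt (by norm_num)
  simp only [latP, Fin.sum_univ_two, Real.norm_eq_abs, sq_abs]
  simp
  field_simp
  ring_nf
  rw [h3]
  ring

lemma latP_inj {n : ℕ} {i j k l : ℤ} (h : latP n i j = latP n k l) : i = k ∧ j = l := by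
  have h1 := latP_norm n i j k l
  rw [h, sub_self, norm_zero] at h1
  have h2 : ((i : ℝ) - k) ^ 2 + ((i : ℝ) - k) * ((j : ℝ) - l) + ((j : ℝ) - l) ^ 2 = 0 := by
    have : (0 : ℝ) < (2 ^ n) ^ 2 := by positivity
    rw [eq_div_iff this.ne'] at h1
    linarith
  have ha : ((i : ℝ) - k) = 0 := by
    have : ((i : ℝ) - k) ^ 2 ≤ 0 := by nlinarith [sq_nonneg (((i : ℝ) - k) + 2 * ((j : ℝ) - l))]
    exact pow_eq_zero_iff (two_ne_zero) |>.1 (le_antisymm this (sq_nonneg _))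
  have hb : ((j : ℝ) - l) = 0 := by
    rw [ha] at h2
    have : ((j : ℝ) - l) ^ 2 = 0 := by linarith
    exact pow_eq_zero_iff (two_ne_zero) |>.1 this
  exact ⟨by exact_mod_cast sub_eq_zero.1 ha, by exact_mod_cast sub_eq_zero.1 hb⟩

lemma isEdge_latP (n : ℕ) (i j k l : ℤ)
    (h : (i - k) ^ 2 + (i - k) * (j - l) + (j - l) ^ 2 = 1) :
    isEdge n (latP n i j) (latP n k l) := by
  unfold isEdge
  have h1 := latP_norm n i j k l
  have h2 : ((i : ℝ) - k) ^ 2 + ((i : ℝ) - k) * ((j : ℝ) - l) + ((j : ℝ) - l) ^ 2 = 1 := by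
    exact_mod_cast h
  rw [h2] at h1
  have h3 : (0 : ℝ) ≤ (2 : ℝ) ^ (-(n : ℤ)) := by positivity
  rw [← abs_of_nonneg (norm_nonneg (latP n i j - latP n k l)), ← abs_of_nonneg h3, ← sq_eq_sq_iff_abs_eq_abs, h1]
  simp [zpow_neg]

lemma cell_shift {n : ℕ} {i j : ℤ} (h : Cell n i j) {a b : ℤ} (hab : Corner a b) :
    Cell (n + 1) (i + 2 ^ n * a) (j + 2 ^ n * b) := by
  induction h with
  | zero => simpa using Cell.succ Cell.zero hab
  | @succ n i j a' b' hc hab' ih =>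
    have := Cell.succ ih hab'
    convert this using 1 <;> ring

lemma cell_unshift {n : ℕ} : ∀ {i j : ℤ}, Cell (n + 1) i j →
    ∃ i' j' a b, Cell n i' j' ∧ Corner a b ∧ i = i' + 2 ^ n * a ∧ j = j' + 2 ^ n * b := by
  induction n with
  | zero =>
    intro i j h
    cases h with
    | succ h hab =>
      cases h
      exact ⟨0, 0, _, _, Cell.zero, hab, by simp, by simp⟩
  | succ n ih =>
    intro i j h
    cases h with
    | succ h hab =>
      obtain ⟨i', j', a, b, hc, hab', rfl, rfl⟩ := ih h
      exact ⟨_, _, a, b, Cell.succ hc hab, hab', by ring, by ring⟩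

/-- index of corner -/
lemma sgMap_latP (n : ℕ) (k : Fin 3) : ∃ a b, Corner a b ∧ ∀ i j,
    sgMap k (latP n i j) = latP (n + 1) (i + 2 ^ n * a) (j + 2 ^ n * b) := by
  fin_cases k
  · refine ⟨0, 0, by simp [Corner], fun i j => ?_⟩
    ext m
    fin_cases m <;> simp [sgMap, latP, ptA] <;> field_simp <;> ring
  · refine ⟨1, 0, by simp [Corner], fun i j => ?_⟩
    ext m
    fin_cases m <;> simp [sgMap, latP, ptA] <;> field_simp <;> ring
  · refine ⟨0, 1, by simp [Corner], fun i j => ?_⟩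
    ext m
    fin_cases m <;> simp [sgMap, latP, ptA] <;> field_simp <;> ring

lemma latP_sgMap (n : ℕ) {a b : ℤ} (hab : Corner a b) : ∃ k : Fin 3, ∀ i j,
    sgMap k (latP n i j) = latP (n + 1) (i + 2 ^ n * a) (j + 2 ^ n * b) := by
  rcases hab with ⟨rfl, rfl⟩ | ⟨rfl, rfl⟩ | ⟨rfl, rfl⟩
  · refine ⟨0, fun i j => ?_⟩
    ext m
    fin_cases m <;> simp [sgMap, latP, ptA] <;> field_simp <;> ring
  · refine ⟨1, fun i j => ?_⟩
    ext m
    fin_cases m <;> simp [sgMap, latP, ptA] <;> field_simp <;> ring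
  · refine ⟨2, fun i j => ?_⟩
    ext m
    fin_cases m <;> simp [sgMap, latP, ptA] <;> field_simp <;> ring

lemma mem_Vn_succ {n : ℕ} {x : Pt} : x ∈ Vn (n + 1) ↔ ∃ k : Fin 3, ∃ y ∈ Vn n, sgMap k y = x := by
  simp only [Vn, Finset.mem_union, Finset.mem_image]
  constructor
  · rintro ((h | h) | h)
    exacts [⟨0, h⟩, ⟨1, h⟩, ⟨2, h⟩]
  · rintro ⟨k, h⟩
    fin_cases k
    exacts [Or.inl (Or.inl h), Or.inl (Or.inr h), Or.inr h]

lemma mem_Vn {n : ℕ} : ∀ {x : Pt}, x ∈ Vn n ↔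
    ∃ i j a b, Cell n i j ∧ Corner a b ∧ x = latP n (i + a) (j + b) := by
  induction n with
  | zero =>
    have h0 : ptA 0 = latP 0 0 0 := by
      ext m; fin_cases m <;> simp [latP, ptA]
    have h1 : ptA 1 = latP 0 1 0 := by
      ext m; fin_cases m <;> simp [latP, ptA]
    have h2 : ptA 2 = latP 0 0 1 := by
      ext m; fin_cases m <;> simp [latP, ptA]
    intro x
    simp only [Vn, Finset.mem_insert, Finset.mem_singleton, h0, h1, h2]
    constructor
    · rintro (rfl | rfl | rfl)
      · exact ⟨0, 0, 0, 0, Cell.zero, by simp [Corner], by simp⟩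
      · exact ⟨0, 0, 1, 0, Cell.zero, by simp [Corner], by simp⟩
      · exact ⟨0, 0, 0, 1, Cell.zero, by simp [Corner], by simp⟩
    · rintro ⟨i, j, a, b, hc, hab, rfl⟩
      cases hc
      rcases hab with ⟨rfl, rfl⟩ | ⟨rfl, rfl⟩ | ⟨rfl, rfl⟩ <;> simp
  | succ n ih =>
    intro x
    rw [mem_Vn_succ]
    constructor
    · rintro ⟨k, y, hy, rfl⟩
      obtain ⟨i, j, a, b, hc, hab, rfl⟩ := ih.1 hy
      obtain ⟨a', b', hab', h⟩ := sgMap_latP n k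
      refine ⟨_, _, a, b, cell_shift hc hab', hab, ?_⟩
      rw [h]
      congr 1 <;> ring
    · rintro ⟨i, j, a, b, hc, hab, rfl⟩
      obtain ⟨i', j', a', b', hc', hab', rfl, rfl⟩ := cell_unshift hc
      obtain ⟨k, hk⟩ := latP_sgMap n hab'
      refine ⟨k, latP n (i' + a) (j' + b), ih.2 ⟨_, _, _, _, hc', hab, rfl⟩, ?_⟩
      rw [hk]
      congr 1 <;> ring

/-- Sum of the squared differences of `u` on a cell. -/
def tri (u : Pt → ℝ) (n : ℕ) (i j : ℤ) : ℝ :=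
  (u (latP n i j) - u (latP n (i + 1) j)) ^ 2 + (u (latP n i j) - u (latP n i (j + 1))) ^ 2 +
    (u (latP n (i + 1) j) - u (latP n i (j + 1))) ^ 2

/-- Ordered pairs of distinct corner offsets. -/
def cpairs : Finset ((ℤ × ℤ) × (ℤ × ℤ)) :=
  {((0, 0), (1, 0)), ((1, 0), (0, 0)), ((0, 0), (0, 1)), ((0, 1), (0, 0)),
    ((1, 0), (0, 1)), ((0, 1), (1, 0))}

lemma energy_ge (u : Pt → ℝ) (n : ℕ) (S : Finset (ℤ × ℤ)) (hS : ∀ c ∈ S, Cell n c.1 c.2) :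
    (5 / 3 : ℝ) ^ n * ∑ c ∈ S, tri u n c.1 c.2 ≤ energy n u := by
  unfold energy energyBi
  rw [mul_assoc]
  refine mul_le_mul_of_nonneg_left ?_ (by positivity)
  set F : Pt × Pt → ℝ := fun p =>
    if isEdge n p.1 p.2 then (u p.2 - u p.1) * (u p.2 - u p.1) else 0 with hF
  set φ : (ℤ × ℤ) × ((ℤ × ℤ) × (ℤ × ℤ)) → Pt × Pt := fun t =>
    (latP n (t.1.1 + t.2.1.1) (t.1.2 + t.2.1.2), latP n (t.1.1 + t.2.2.1) (t.1.2 + t.2.2.2)) with hφ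
  have hmem : ∀ d ∈ cpairs, Corner d.1.1 d.1.2 ∧ Corner d.2.1 d.2.2 ∧
      min d.1.1 d.2.1 = 0 ∧ min d.1.2 d.2.2 = 0 ∧
      (d.1.1 - d.2.1) ^ 2 + (d.1.1 - d.2.1) * (d.1.2 - d.2.2) + (d.1.2 - d.2.2) ^ 2 = 1 := by
    intro d hd
    simp only [cpairs, Finset.mem_insert, Finset.mem_singleton] at hd
    rcases hd with rfl | rfl | rfl | rfl | rfl | rfl <;> simp [Corner]
  have hinj : Set.InjOn φ (S ×ˢ cpairs : Finset _) := by
    rintro ⟨⟨i, j⟩, ⟨⟨a, b⟩, ⟨c, d⟩⟩⟩ h ⟨⟨i', j'⟩, ⟨⟨a', b'⟩, ⟨c', d'⟩⟩⟩ h' heq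
    simp only [Finset.coe_product, Set.mem_prod, Finset.mem_coe] at h h'
    obtain ⟨-, -, h1, h2, -⟩ := hmem _ h.2
    obtain ⟨-, -, h3, h4, -⟩ := hmem _ h'.2
    simp only [hφ, Prod.mk.injEq] at heq
    obtain ⟨e1, e2⟩ := latP_inj heq.1
    obtain ⟨e3, e4⟩ := latP_inj heq.2
    simp only [Prod.mk.injEq] at *
    omega
  have hsum : ∑ x ∈ Vn n, ∑ y ∈ Vn n, (if isEdge n x y then (u y - u x) * (u y - u x) else 0)
      = ∑ p ∈ Vn n ×ˢ Vn n, F p := by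
    rw [Finset.sum_product]
  rw [hsum]
  have hle : ∑ p ∈ (S ×ˢ cpairs).image φ, F p ≤ ∑ p ∈ Vn n ×ˢ Vn n, F p := by
    refine Finset.sum_le_sum_of_subset_of_nonneg ?_ ?_
    · intro p hp
      obtain ⟨t, ht, rfl⟩ := Finset.mem_image.1 hp
      rw [Finset.mem_product] at ht
      obtain ⟨h1, h2, -⟩ := hmem _ ht.2
      exact Finset.mem_product.2 ⟨mem_Vn.2 ⟨_, _, _, _, hS _ ht.1, h1, rfl⟩,
        mem_Vn.2 ⟨_, _, _, _, hS _ ht.1, h2, rfl⟩⟩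
    · intro p _ _
      simp only [hF]
      split_ifs
      · exact mul_self_nonneg _
      · exact le_rfl
  rw [Finset.sum_image hinj, Finset.sum_product] at hle
  have heq : ∀ c ∈ S, ∑ d ∈ cpairs, F (φ (c, d)) = 2 * tri u n c.1 c.2 := by
    intro c _
    have : ∀ d ∈ cpairs, F (φ (c, d)) =
        (u (latP n (c.1 + d.2.1) (c.2 + d.2.2)) - u (latP n (c.1 + d.1.1) (c.2 + d.1.2))) ^ 2 := by
      intro d hd
      obtain ⟨-, -, -, -, h⟩ := hmem d hd
      simp only [hF, hφ]
      rw [if_pos, sq]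
      apply isEdge_latP
      rw [← h]
      ring
    rw [Finset.sum_congr rfl this]
    simp only [cpairs]
    repeat rw [Finset.sum_insert (by decide)]
    rw [Finset.sum_singleton]
    simp only [tri, add_zero]
    ring
  rw [Finset.sum_congr rfl heq, ← Finset.mul_sum] at hle
  linarith

lemma tri_nonneg (u : Pt → ℝ) (n : ℕ) (i j : ℤ) : 0 ≤ tri u n i j := by
  unfold tri; positivity

lemma tri_edge (u : Pt → ℝ) (n : ℕ) (i j : ℤ) {a b c d : ℤ} (h : Corner a b) (h' : Corner c d) :
    (u (latP n (i + a) (j + b)) - u (latP n (i + c) (j + d))) ^ 2 ≤ 2 / 3 * tri u n i j := by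
  unfold tri
  generalize hx : u (latP n i j) = x
  generalize hy : u (latP n (i + 1) j) = y
  generalize hz : u (latP n i (j + 1)) = z
  rcases h with ⟨rfl, rfl⟩ | ⟨rfl, rfl⟩ | ⟨rfl, rfl⟩ <;>
  rcases h' with ⟨rfl, rfl⟩ | ⟨rfl, rfl⟩ | ⟨rfl, rfl⟩ <;>
  simp only [add_zero, hx, hy, hz] <;>
  nlinarith [sq_nonneg (x + y - 2 * z), sq_nonneg (x + z - 2 * y), sq_nonneg (y + z - 2 * x),
    sq_nonneg (x - y), sq_nonneg (y - z), sq_nonneg (x - z)]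

lemma quad9 (x y z m1 m2 m3 : ℝ) (w : ℝ)
    (hw : w = x ∨ w = y ∨ w = z ∨ w = m1 ∨ w = m2 ∨ w = m3) :
    (w - x) ^ 2 ≤ 10 / 9 * (((x - m1) ^ 2 + (x - m2) ^ 2 + (m1 - m2) ^ 2) +
      ((m1 - y) ^ 2 + (m1 - m3) ^ 2 + (y - m3) ^ 2) +
      ((m2 - m3) ^ 2 + (m2 - z) ^ 2 + (m3 - z) ^ 2)) := by
  have k1 := sq_nonneg (m1 - (2 * x + 2 * y + z) / 5)
  have k2 := sq_nonneg (m2 - (2 * x + 2 * z + y) / 5)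
  have k3 := sq_nonneg (m3 - (2 * y + 2 * z + x) / 5)
  have k4 := sq_nonneg ((m1 - (2 * x + 2 * y + z) / 5) - (m2 - (2 * x + 2 * z + y) / 5))
  have k5 := sq_nonneg ((m1 - (2 * x + 2 * y + z) / 5) - (m3 - (2 * y + 2 * z + x) / 5))
  have k6 := sq_nonneg ((m2 - (2 * x + 2 * z + y) / 5) - (m3 - (2 * y + 2 * z + x) / 5))
  have k7 := sq_nonneg (x + y - 2 * z)
  have k8 := sq_nonneg (x + z - 2 * y)
  rcases hw with rfl | rfl | rfl | rfl | rfl | rfl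
  · rw [sub_self, zero_pow two_ne_zero]; positivity
  · linarith
  · linarith
  · linarith [sq_nonneg (x - w), sq_nonneg (x - m2), sq_nonneg (w - m2), sq_nonneg (w - y), sq_nonneg (w - m3), sq_nonneg (y - m3), sq_nonneg (m2 - m3), sq_nonneg (m2 - z), sq_nonneg (m3 - z)]
  · linarith [sq_nonneg (x - m1), sq_nonneg (x - w), sq_nonneg (m1 - w), sq_nonneg (m1 - y), sq_nonneg (m1 - m3), sq_nonneg (y - m3), sq_nonneg (w - m3), sq_nonneg (w - z), sq_nonneg (m3 - z)]
  · linarith [sq_nonneg (x - m1), sq_nonneg (x - m2), sq_nonneg (m1 - m2), sq_nonneg (m1 - y), sq_nonneg (m1 - w), sq_nonneg (y - w), sq_nonneg (m2 - w), sq_nonneg (m2 - z), sq_nonneg (w - z), sq_nonneg (x - m1 - (m1 - w)), sq_nonneg (x - m2 - (m2 - w))]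

/-- Sum of `tri` over the three subcells. -/
def tri3 (u : Pt → ℝ) (n : ℕ) (i j : ℤ) : ℝ :=
  tri u (n + 1) (2 * i) (2 * j) + tri u (n + 1) (2 * i + 1) (2 * j) +
    tri u (n + 1) (2 * i) (2 * j + 1)

lemma tri3_bound (u : Pt → ℝ) (n : ℕ) (i j : ℤ) {a b c d e f : ℤ} (h : Corner a b)
    (h' : Corner c d) (hv : Corner e f) :
    (u (latP (n + 1) (2 * i + a + c) (2 * j + b + d)) - u (latP n (i + e) (j + f))) ^ 2
      ≤ 10 / 9 * tri3 u n i j := by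
  rw [← latP_double n (i + e) (j + f)]
  unfold tri3 tri
  have e1 : 2 * i + 1 + 1 = 2 * i + 2 := by ring
  have e2 : 2 * j + 1 + 1 = 2 * j + 2 := by ring
  have e3 : 2 * (i + 1) = 2 * i + 2 := by ring
  have e4 : 2 * (j + 1) = 2 * j + 2 := by ring
  rcases hv with ⟨rfl, rfl⟩ | ⟨rfl, rfl⟩ | ⟨rfl, rfl⟩ <;>
    simp only [add_zero, e1, e2, e3, e4] <;>
    generalize hx : u (latP (n + 1) (2 * i) (2 * j)) = x <;>
    generalize hy : u (latP (n + 1) (2 * i + 2) (2 * j)) = y <;>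
    generalize hz : u (latP (n + 1) (2 * i) (2 * j + 2)) = z <;>
    generalize hm1 : u (latP (n + 1) (2 * i + 1) (2 * j)) = m1 <;>
    generalize hm2 : u (latP (n + 1) (2 * i) (2 * j + 1)) = m2 <;>
    generalize hm3 : u (latP (n + 1) (2 * i + 1) (2 * j + 1)) = m3 <;>
    generalize hw : u (latP (n + 1) (2 * i + a + c) (2 * j + b + d)) = w
  all_goals
    have hw' : w = x ∨ w = y ∨ w = z ∨ w = m1 ∨ w = m2 ∨ w = m3 := by
      rw [← hw]
      rcases h with ⟨rfl, rfl⟩ | ⟨rfl, rfl⟩ | ⟨rfl, rfl⟩ <;>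
      rcases h' with ⟨rfl, rfl⟩ | ⟨rfl, rfl⟩ | ⟨rfl, rfl⟩ <;>
      simp only [add_zero, e1, e2, hx, hy, hz, hm1, hm2, hm3, true_or, or_true]
  · have := quad9 x y z m1 m2 m3 w (by tauto)
    linarith
  · have := quad9 y x z m1 m3 m2 w (by tauto)
    linarith
  · have := quad9 z x y m2 m3 m1 w (by tauto)
    linarith

lemma pow53 (n : ℕ) {A E : ℝ} (h : (5 / 3 : ℝ) ^ n * A ≤ E) : A ≤ (3 / 5 : ℝ) ^ n * E := by
  have h1 : (3 / 5 : ℝ) ^ n * (5 / 3 : ℝ) ^ n = 1 := by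
    rw [← mul_pow]; norm_num
  calc A = (3 / 5 : ℝ) ^ n * ((5 / 3 : ℝ) ^ n * A) := by rw [← mul_assoc, h1, one_mul]
    _ ≤ _ := mul_le_mul_of_nonneg_left h (by positivity)

lemma abs_bound {n : ℕ} {E p q : ℝ} (hE : 0 ≤ E) (h : 2 * (p ^ 2 + q ^ 2) ≤ 4 / 3 * ((3 / 5 : ℝ) ^ n * E)) :
    |p| + |q| ≤ Real.sqrt (4 / 3) * Real.sqrt E * Real.sqrt (3 / 5) ^ n := by
  apply le_of_sq_le_sq _ (by positivity)
  have e : (Real.sqrt (4 / 3) * Real.sqrt E * Real.sqrt (3 / 5) ^ n) ^ 2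
      = 4 / 3 * ((3 / 5 : ℝ) ^ n * E) := by
    rw [mul_pow, mul_pow, Real.sq_sqrt (by norm_num), Real.sq_sqrt hE, ← pow_mul, mul_comm n 2,
      pow_mul, Real.sq_sqrt (by norm_num)]
    ring
  rw [e]
  refine le_trans ?_ h
  rw [← sq_abs p, ← sq_abs q]
  nlinarith [sq_nonneg (|p| - |q|)]

lemma step_bound (u : Pt → ℝ) {E : ℝ} (hE : 0 ≤ E) (hu : ∀ n, energy n u ≤ E) {n : ℕ}
    {i j k l : ℤ} (h1 : Cell n i j) (h2 : Cell n k l) (hne : (i, j) ≠ (k, l))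
    {a b c d a' b' c' d' : ℤ} (ha : Corner a b) (hc : Corner c d)
    (ha' : Corner a' b') (hc' : Corner c' d') :
    |u (latP n (i + a) (j + b)) - u (latP n (i + c) (j + d))| +
      |u (latP n (k + a') (l + b')) - u (latP n (k + c') (l + d'))| ≤
      Real.sqrt (4 / 3) * Real.sqrt E * Real.sqrt (3 / 5) ^ n := by
  apply abs_bound hE
  have h := energy_ge u n {(i, j), (k, l)} (by
    intro c hc
    simp only [Finset.mem_insert, Finset.mem_singleton] at hc
    rcases hc with rfl | rfl
    exacts [h1, h2])
  rw [Finset.sum_pair hne] at h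
  have h' := pow53 n (h.trans (hu n))
  have t1 := tri_edge u n i j ha hc
  have t2 := tri_edge u n k l ha' hc'
  simp only at h'
  linarith

lemma corner_cases {a b : ℤ} (h : Corner a b) :
    0 ≤ a ∧ 0 ≤ b ∧ a + b ≤ 1 := by
  unfold Corner at h; omega

lemma top_bound (u : Pt → ℝ) {E : ℝ} (hE : 0 ≤ E) (hu : ∀ n, energy n u ≤ E) {n : ℕ}
    {i j k l : ℤ} (h1 : Cell n i j) (h2 : Cell n k l) (hne : (i, j) ≠ (k, l))
    {a b c d a' b' c' d' e f e' f' : ℤ} (ha : Corner a b) (hc : Corner c d)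
    (ha' : Corner a' b') (hc' : Corner c' d') (he : Corner e f) (he' : Corner e' f')
    (ht1 : i + e = k + e') (ht2 : j + f = l + f') :
    |u (latP (n + 1) (2 * i + a + c) (2 * j + b + d)) -
      u (latP (n + 1) (2 * k + a' + c') (2 * l + b' + d'))| ≤
      Real.sqrt (4 / 3) * Real.sqrt E * Real.sqrt (3 / 5) ^ n := by
  have c00 : Corner 0 0 := by simp [Corner]
  have c10 : Corner 1 0 := by simp [Corner]
  have c01 : Corner 0 1 := by simp [Corner]
  have t1 := tri3_bound u n i j ha hc he
  have t2 := tri3_bound u n k l ha' hc' he'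
  rw [← ht1, ← ht2] at t2
  have hne' : i ≠ k ∨ j ≠ l := by
    by_contra hcon
    push Not at hcon
    exact hne (by rw [hcon.1, hcon.2])
  have h := energy_ge u (n + 1) {(2 * i, 2 * j), (2 * i + 1, 2 * j), (2 * i, 2 * j + 1),
      (2 * k, 2 * l), (2 * k + 1, 2 * l), (2 * k, 2 * l + 1)} (by
    intro c hc
    simp only [Finset.mem_insert, Finset.mem_singleton] at hc
    rcases hc with rfl | rfl | rfl | rfl | rfl | rfl
    · simpa using Cell.succ h1 c00
    · simpa using Cell.succ h1 c10
    · simpa using Cell.succ h1 c01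
    · simpa using Cell.succ h2 c00
    · simpa using Cell.succ h2 c10
    · simpa using Cell.succ h2 c01)
  rw [Finset.sum_insert, Finset.sum_insert, Finset.sum_insert, Finset.sum_insert,
    Finset.sum_pair] at h
  rotate_left
  iterate 5
    · simp only [Finset.mem_insert, Finset.mem_singleton, Prod.mk.injEq, ne_eq]
      omega
  have h' := pow53 (n + 1) (h.trans (hu (n + 1)))
  rw [pow_succ] at h'
  unfold tri3 at t1 t2
  have key := abs_bound (n := n) hE
    (p := u (latP (n + 1) (2 * i + a + c) (2 * j + b + d)) - u (latP n (i + e) (j + f)))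
    (q := u (latP (n + 1) (2 * k + a' + c') (2 * l + b' + d')) - u (latP n (i + e) (j + f)))
    (by linarith)
  refine le_trans ?_ key
  rw [abs_sub_comm (u (latP (n + 1) (2 * k + a' + c') (2 * l + b' + d')))]
  exact abs_sub_le _ _ _

/-- `x`, with real lattice coordinates, lies in the triangle of the cell. -/
def InTri (n : ℕ) (i j : ℤ) (x y : ℝ) : Prop :=
  (i : ℝ) ≤ 2 ^ n * x ∧ (j : ℝ) ≤ 2 ^ n * y ∧ 2 ^ n * x + 2 ^ n * y ≤ i + j + 1

lemma InTri.parent {n : ℕ} {i j a b : ℤ} {x y : ℝ} (hab : Corner a b)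
    (h : InTri (n + 1) (2 * i + a) (2 * j + b) x y) : InTri n i j x y := by
  obtain ⟨h1, h2, h3⟩ := h
  obtain ⟨k1, k2, k3⟩ := corner_cases hab
  have k1' : (0 : ℝ) ≤ a := by exact_mod_cast k1
  have k2' : (0 : ℝ) ≤ b := by exact_mod_cast k2
  have k3' : (a : ℝ) + b ≤ 1 := by exact_mod_cast k3
  push_cast at h1 h2 h3
  rw [pow_succ] at h1 h2 h3
  refine ⟨?_, ?_, ?_⟩ <;> nlinarith

/-- Two cells coincide or share a corner. -/
def Touch (i j k l : ℤ) : Prop :=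
  ∃ a b c d, Corner a b ∧ Corner c d ∧ i + a = k + c ∧ j + b = l + d

lemma not_touch {i j k l : ℤ} (h : ¬ Touch i j k l) :
    2 ≤ k - i ∨ 2 ≤ i - k ∨ 2 ≤ l - j ∨ 2 ≤ j - l ∨ 2 ≤ (k - i) + (l - j) ∨
      2 ≤ (i - k) + (j - l) := by
  have c00 : Corner 0 0 := by simp [Corner]
  have c10 : Corner 1 0 := by simp [Corner]
  have c01 : Corner 0 1 := by simp [Corner]
  have h1 : ¬ (i = k ∧ j = l) := fun hh => h ⟨_, _, _, _, c00, c00, by omega, by omega⟩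
  have h2 : ¬ (i + 1 = k ∧ j = l) := fun hh => h ⟨_, _, _, _, c10, c00, by omega, by omega⟩
  have h3 : ¬ (i = k + 1 ∧ j = l) := fun hh => h ⟨_, _, _, _, c00, c10, by omega, by omega⟩
  have h4 : ¬ (i = k ∧ j + 1 = l) := fun hh => h ⟨_, _, _, _, c01, c00, by omega, by omega⟩
  have h5 : ¬ (i = k ∧ j = l + 1) := fun hh => h ⟨_, _, _, _, c00, c01, by omega, by omega⟩
  have h6 : ¬ (i + 1 = k ∧ j = l + 1) := fun hh => h ⟨_, _, _, _, c10, c01, by omega, by omega⟩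
  have h7 : ¬ (i = k + 1 ∧ j + 1 = l) := fun hh => h ⟨_, _, _, _, c01, c10, by omega, by omega⟩
  omega

lemma touch_siblings {i j a b c d : ℤ} (h : Corner a b) (h' : Corner c d) :
    Touch (2 * i + a) (2 * j + b) (2 * i + c) (2 * j + d) :=
  ⟨c, d, a, b, h', h, by ring, by ring⟩

lemma dist_bound {n : ℕ} {i j k l : ℤ} (h : ¬ Touch i j k l) {x y z w : ℝ}
    (h1 : InTri n i j x y) (h2 : InTri n k l z w) :
    3 / 4 / (2 ^ n) ^ 2 ≤ (x - z) ^ 2 + (x - z) * (y - w) + (y - w) ^ 2 := by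
  obtain ⟨a1, a2, a3⟩ := h1
  obtain ⟨b1, b2, b3⟩ := h2
  have hp : (0 : ℝ) < 2 ^ n := by positivity
  rw [div_le_iff₀ (by positivity)]
  set X := 2 ^ n * x with hX
  set Y := 2 ^ n * y with hY
  set Z := 2 ^ n * z with hZ
  set W := 2 ^ n * w with hW
  have e : ((x - z) ^ 2 + (x - z) * (y - w) + (y - w) ^ 2) * (2 ^ n) ^ 2
      = (X - Z) ^ 2 + (X - Z) * (Y - W) + (Y - W) ^ 2 := by
    rw [hX, hY, hZ, hW]; ring
  rw [e]
  have q1 := sq_nonneg ((X - Z) + 2 * (Y - W))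
  have q2 := sq_nonneg (2 * (X - Z) + (Y - W))
  have q3 := sq_nonneg ((X - Z) - (Y - W))
  rcases not_touch h with h | h | h | h | h | h
  · have h' : (2 : ℝ) ≤ k - i := by exact_mod_cast h
    have : 1 ≤ Z - X := by linarith
    nlinarith
  · have h' : (2 : ℝ) ≤ i - k := by exact_mod_cast h
    have : 1 ≤ X - Z := by linarith
    nlinarith
  · have h' : (2 : ℝ) ≤ l - j := by exact_mod_cast h
    have : 1 ≤ W - Y := by linarith
    nlinarith
  · have h' : (2 : ℝ) ≤ j - l := by exact_mod_cast h
    have : 1 ≤ Y - W := by linarith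
    nlinarith
  · have h' : (2 : ℝ) ≤ (k - i) + (l - j) := by exact_mod_cast h
    have : 1 ≤ (Z + W) - (X + Y) := by linarith
    nlinarith
  · have h' : (2 : ℝ) ≤ (i - k) + (j - l) := by exact_mod_cast h
    have : 1 ≤ (X + Y) - (Z + W) := by linarith
    nlinarith

lemma alpha_pos : 0 < Real.log (5 / 3) / Real.log 4 :=
  div_pos (Real.log_pos (by norm_num)) (Real.log_pos (by norm_num))

lemma two_rpow_alpha : (2 : ℝ) ^ (Real.log (5 / 3) / Real.log 4) = (Real.sqrt (3 / 5))⁻¹ := by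
  have h4 : Real.log 4 = 2 * Real.log 2 := by
    rw [show (4 : ℝ) = 2 ^ 2 by norm_num, Real.log_pow]; norm_num
  have hl : Real.log 2 ≠ 0 := (Real.log_pos (by norm_num)).ne'
  rw [Real.rpow_def_of_pos (by norm_num), h4,
    show Real.log 2 * (Real.log (5 / 3) / (2 * Real.log 2)) = Real.log (5 / 3) / 2 by field_simp,
    ← Real.sqrt_inv, ← Real.log_sqrt (by norm_num), Real.exp_log (by positivity)]
  norm_num

/-- numerical estimate -/
lemma num_bound (n : ℕ) {D : ℝ} (hD : 0 ≤ D) (h : 3 / 4 / (2 ^ (n + 1)) ^ 2 ≤ D ^ 2) :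
    Real.sqrt (4 / 3) * Real.sqrt (3 / 5) ^ n *
      (1 + Real.sqrt (3 / 5) ^ 2 / (1 - Real.sqrt (3 / 5)))
      ≤ 6 * D ^ (Real.log (5 / 3) / Real.log 4) := by
  set r := Real.sqrt (3 / 5) with hr
  set α := Real.log (5 / 3) / Real.log 4 with hα
  have hr2 : r ^ 2 = 3 / 5 := Real.sq_sqrt (by norm_num)
  have hr0 : 0 < r := Real.sqrt_pos.2 (by norm_num)
  have hr1 : r ≤ 0.7746 := by
    rw [hr, Real.sqrt_le_left (by norm_num)]; norm_num
  have hr3 : 0.774 ≤ r := Real.le_sqrt_of_sq_le (by norm_num)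
  have hs : Real.sqrt (4 / 3) ≤ 1.155 := by
    rw [Real.sqrt_le_left (by norm_num)]; norm_num
  -- fourth power
  have hD4 : (1 / 32 : ℝ) * (1 / 2 ^ n) ^ 4 ≤ D ^ 4 := by
    have h0 : (0 : ℝ) ≤ 3 / 4 / (2 ^ (n + 1)) ^ 2 := by positivity
    have := mul_self_le_mul_self h0 h
    have e : (3 / 4 / (2 ^ (n + 1)) ^ 2 : ℝ) * (3 / 4 / (2 ^ (n + 1)) ^ 2) = 9 / 256 * (1 / 2 ^ n) ^ 4 := by
      field_simp; ring
    have hp : (0 : ℝ) ≤ (1 / 2 ^ n) ^ 4 := by positivity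
    nlinarith
  have h1 : ((1 / 32 : ℝ) * (1 / 2 ^ n) ^ 4) ^ α ≤ (D ^ 4) ^ α :=
    Real.rpow_le_rpow (by positivity) hD4 alpha_pos.le
  have e1 : (D ^ 4) ^ α = (D ^ α) ^ 4 := by
    rw [← Real.rpow_natCast, ← Real.rpow_natCast, ← Real.rpow_mul hD, ← Real.rpow_mul hD, mul_comm]
  have e2 : ((1 / 32 : ℝ) * (1 / 2 ^ n) ^ 4) ^ α = r ^ (5 + 4 * n) := by
    have : ((1 / 32 : ℝ) * (1 / 2 ^ n) ^ 4) = ((2 : ℝ) ^ (5 + 4 * n))⁻¹ := by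
      rw [pow_add, mul_comm 4 n, pow_mul]; field_simp; norm_num
    rw [this, Real.inv_rpow (by positivity), ← Real.rpow_natCast, ← Real.rpow_mul (by norm_num),
      mul_comm, Real.rpow_mul (by norm_num), hα, two_rpow_alpha, Real.rpow_natCast, inv_pow, inv_inv]
  rw [e1, e2] at h1
  have hfac : 1 + r ^ 2 / (1 - r) ≤ 3.663 := by
    have : r ^ 2 / (1 - r) ≤ 2.663 := by
      rw [div_le_iff₀ (by linarith), hr2]; linarith
    linarith
  have hfac0 : 0 ≤ 1 + r ^ 2 / (1 - r) := by
    have : 0 < 1 - r := by linarith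
    positivity
  have h5 : (0.71 : ℝ) ^ 4 ≤ r ^ 5 := by
    have : r ^ 5 = (r ^ 2) ^ 2 * r := by ring
    rw [this, hr2]; norm_num at *; linarith
  have hfin : 0.71 * r ^ n ≤ D ^ α := by
    refine le_of_pow_le_pow_left₀ (n := 4) (by norm_num) (Real.rpow_nonneg hD _) ?_
    refine le_trans ?_ h1
    rw [mul_pow, pow_add, mul_comm 4 n, pow_mul]
    exact mul_le_mul_of_nonneg_right h5 (by positivity)
  have hrn : 0 < r ^ n := by positivity
  calc Real.sqrt (4 / 3) * r ^ n * (1 + r ^ 2 / (1 - r))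
      ≤ 1.155 * r ^ n * 3.663 := by gcongr
    _ ≤ 6 * (0.71 * r ^ n) := by nlinarith
    _ ≤ _ := by linarith

lemma cell_inv {n : ℕ} {i j : ℤ} (h : Cell (n + 1) i j) :
    ∃ i' j' a b, Cell n i' j' ∧ Corner a b ∧ i = 2 * i' + a ∧ j = 2 * j' + b := by
  cases h with
  | succ h hab => exact ⟨_, _, _, _, h, hab, rfl, rfl⟩

lemma climb (u : Pt → ℝ) {E : ℝ} (hE : 0 ≤ E) (hu : ∀ n, energy n u ≤ E) {x y z w D d : ℝ}
    (hd : 0 ≤ d) (hd2 : d ^ 2 = (x - z) ^ 2 + (x - z) * (y - w) + (y - w) ^ 2) (n : ℕ) :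
    ∀ i j k l a b a' b' : ℤ, Cell n i j → Cell n k l → ¬ Touch i j k l →
    InTri n i j x y → InTri n k l z w → Corner a b → Corner a' b' →
    D ≤ |u (latP n (i + a) (j + b)) - u (latP n (k + a') (l + b'))| +
      Real.sqrt (4 / 3) * Real.sqrt E * (Real.sqrt (3 / 5) ^ (n + 1) / (1 - Real.sqrt (3 / 5))) →
    D ≤ 6 * Real.sqrt E * d ^ (Real.log (5 / 3) / Real.log 4) := by
  have hr1 : 1 - Real.sqrt (3 / 5) ≠ 0 := by
    have : Real.sqrt (3 / 5) < 1 := by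
      rw [Real.sqrt_lt' (by norm_num)]; norm_num
    linarith
  induction n with
  | zero =>
    intro i j k l a b a' b' h1 h2 ht
    cases h1
    cases h2
    exact absurd ⟨0, 0, 0, 0, by simp [Corner], by simp [Corner], rfl, rfl⟩ ht
  | succ n ih =>
    intro i₁ j₁ k₁ l₁ a b a' b' h1 h2 ht t1 t2 ha ha' hD
    have hdist := dist_bound ht t1 t2
    obtain ⟨i, j, c, e, g1, hc, rfl, rfl⟩ := cell_inv h1
    obtain ⟨k, l, c', e', g2, hc', rfl, rfl⟩ := cell_inv h2
    by_cases htp : Touch i j k l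
    · have hne : (i, j) ≠ (k, l) := by
        rintro h
        simp only [Prod.mk.injEq] at h
        obtain ⟨rfl, rfl⟩ := h
        exact ht (touch_siblings hc hc')
      obtain ⟨p, q, p', q', hp, hp', v1, v2⟩ := htp
      have hb := top_bound u hE hu g1 g2 hne hc ha hc' ha' hp hp' v1 v2
      have hn := num_bound n hd (by rw [hd2]; exact hdist)
      have hn' := mul_le_mul_of_nonneg_left hn (Real.sqrt_nonneg E)
      have e1 : Real.sqrt (3 / 5) ^ (n + 1 + 1) = Real.sqrt (3 / 5) ^ n * Real.sqrt (3 / 5) ^ 2 := by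
        ring
      rw [e1] at hD
      have : Real.sqrt E * (Real.sqrt (4 / 3) * Real.sqrt (3 / 5) ^ n *
          (1 + Real.sqrt (3 / 5) ^ 2 / (1 - Real.sqrt (3 / 5)))) =
          Real.sqrt (4 / 3) * Real.sqrt E * Real.sqrt (3 / 5) ^ n +
          Real.sqrt (4 / 3) * Real.sqrt E * (Real.sqrt (3 / 5) ^ n * Real.sqrt (3 / 5) ^ 2 /
            (1 - Real.sqrt (3 / 5))) := by
        ring
      linarith
    · refine ih i j k l c e c' e' g1 g2 htp (t1.parent hc) (t2.parent hc') hc hc' ?_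
      have hne : (2 * i + c, 2 * j + e) ≠ (2 * k + c', 2 * l + e') := by
        rintro h
        simp only [Prod.mk.injEq] at h
        apply ht
        rw [h.1, h.2]
        exact ⟨0, 0, 0, 0, by simp [Corner], by simp [Corner], rfl, rfl⟩
      have hs := step_bound u hE hu (Cell.succ g1 hc) (Cell.succ g2 hc') hne ha hc ha' hc'
      have q1 : latP (n + 1) (2 * i + c + c) (2 * j + e + e) = latP n (i + c) (j + e) := by
        rw [← latP_double n]; congr 1 <;> ring
      have q2 : latP (n + 1) (2 * k + c' + c') (2 * l + e' + e') = latP n (k + c') (l + e') := by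
        rw [← latP_double n]; congr 1 <;> ring
      rw [q1, q2] at hs
      generalize u (latP n (i + c) (j + e)) = A at *
      generalize u (latP n (k + c') (l + e')) = B at *
      generalize u (latP (n + 1) (2 * i + c + a) (2 * j + e + b)) = A' at *
      generalize u (latP (n + 1) (2 * k + c' + a') (2 * l + e' + b')) = B' at *
      have tr : |A' - B'| ≤ |A' - A| + |A - B| + |B' - B| := by
        rw [abs_sub_comm B' B]
        calc |A' - B'| ≤ |A' - B| + |B - B'| := abs_sub_le _ _ _
          _ ≤ _ := by linarith [abs_sub_le A' A B]
      have e1 : Real.sqrt (3 / 5) ^ (n + 1) / (1 - Real.sqrt (3 / 5)) =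
          Real.sqrt (3 / 5) ^ (n + 1) + Real.sqrt (3 / 5) ^ (n + 1 + 1) / (1 - Real.sqrt (3 / 5)) := by
        field_simp
        ring
      rw [e1, mul_add]
      linarith

lemma Vn_lift {n : ℕ} {i j a b : ℤ} (h : Cell n i j) (hab : Corner a b) (k : ℕ) :
    ∃ i' j', Cell (n + k) i' j' ∧ i' + a = 2 ^ k * (i + a) ∧ j' + b = 2 ^ k * (j + b) := by
  induction k with
  | zero => exact ⟨i, j, h, by simp, by simp⟩
  | succ k ih =>
    obtain ⟨i', j', hc, h1, h2⟩ := ih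
    refine ⟨_, _, Cell.succ hc hab, ?_, ?_⟩
    · rw [pow_succ]; linarith
    · rw [pow_succ]; linarith

lemma latP_pow (n k : ℕ) (i j : ℤ) : latP (n + k) (2 ^ k * i) (2 ^ k * j) = latP n i j := by
  induction k with
  | zero => simp
  | succ k ih =>
    rw [← ih, ← latP_double (n + k)]
    congr 1 <;> ring

lemma holder_main (u : Pt → ℝ) {E : ℝ} (hE : 0 ≤ E) (hu : ∀ n, energy n u ≤ E) {x y : Pt}
    (hx : x ∈ Vstar) (hy : y ∈ Vstar) :
    |u x - u y| ≤ 6 * Real.sqrt E * ‖x - y‖ ^ (Real.log (5 / 3) / Real.log 4) := by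
  by_cases hxy : x = y
  · subst hxy
    rw [sub_self, abs_zero]
    positivity
  simp only [Vstar, Set.mem_iUnion, Finset.mem_coe] at hx hy
  obtain ⟨n, hx⟩ := hx
  obtain ⟨m, hy⟩ := hy
  obtain ⟨i, j, a, b, hc, hab, hxe⟩ := mem_Vn.1 hx
  obtain ⟨k, l, c, d, hc', hcd, hye⟩ := mem_Vn.1 hy
  obtain ⟨i1, j1, hc1, p1, p2⟩ := Vn_lift hc hab m
  obtain ⟨k1, l1, hc2, p3, p4⟩ := Vn_lift hc' hcd n
  rw [add_comm m n] at hc2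
  obtain ⟨i2, j2, hc3, p5, p6⟩ := Vn_lift hc1 hab 2
  obtain ⟨k2, l2, hc4, p7, p8⟩ := Vn_lift hc2 hcd 2
  have hxe1 : x = latP (n + m) (i1 + a) (j1 + b) := by
    rw [p1, p2, latP_pow, hxe]
  have hye1 : y = latP (n + m) (k1 + c) (l1 + d) := by
    rw [p3, p4, add_comm n m, latP_pow, hye]
  have hxe2 : x = latP (n + m + 2) (i2 + a) (j2 + b) := by
    rw [p5, p6, latP_pow, hxe1]
  have hye2 : y = latP (n + m + 2) (k2 + c) (l2 + d) := by
    rw [p7, p8, latP_pow, hye1]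
  have hne : i1 + a ≠ k1 + c ∨ j1 + b ≠ l1 + d := by
    by_contra hcon
    push Not at hcon
    exact hxy (by rw [hxe1, hye1, hcon.1, hcon.2])
  obtain ⟨u1, u2, u3⟩ := corner_cases hab
  obtain ⟨u4, u5, u6⟩ := corner_cases hcd
  have hnt : ¬ Touch i2 j2 k2 l2 := by
    rintro ⟨e, f, e', f', he, he', w1, w2⟩
    obtain ⟨v1, v2, v3⟩ := corner_cases he
    obtain ⟨v4, v5, v6⟩ := corner_cases he'
    norm_num at p5 p6 p7 p8
    omega
  set N := n + m + 2 with hN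
  have hp : (0 : ℝ) < 2 ^ N := by positivity
  have tri_in : ∀ {i j a b : ℤ}, Corner a b →
      InTri N i j (((i + a : ℤ) : ℝ) / 2 ^ N) (((j + b : ℤ) : ℝ) / 2 ^ N) := by
    intro i j a b hab
    obtain ⟨u1, u2, u3⟩ := corner_cases hab
    unfold InTri
    rw [mul_div_cancel₀ _ hp.ne', mul_div_cancel₀ _ hp.ne']
    refine ⟨?_, ?_, ?_⟩
    · exact_mod_cast (by omega : i ≤ i + a)
    · exact_mod_cast (by omega : j ≤ j + b)
    · exact_mod_cast (by omega : i + a + (j + b) ≤ i + j + 1)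
  have hdd := latP_norm N (i2 + a) (j2 + b) (k2 + c) (l2 + d)
  rw [← hxe2, ← hye2] at hdd
  refine climb u hE hu (norm_nonneg (x - y)) ?_ N i2 j2 k2 l2 a b c d hc3 hc4 hnt
    (tri_in hab) (tri_in hcd) hab hcd ?_
  · rw [hdd]
    field_simp
  · rw [← hxe2, ← hye2]
    have : Real.sqrt (3 / 5) ≤ 1 := by
      rw [Real.sqrt_le_left (by norm_num)]; norm_num
    have : 0 ≤ 1 - Real.sqrt (3 / 5) := by linarith
    have : 0 ≤ Real.sqrt (4 / 3) * Real.sqrt E *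
      (Real.sqrt (3 / 5) ^ (N + 1) / (1 - Real.sqrt (3 / 5))) := by positivity
    linarith

/-- With `α = log(5/3)/log 4`: if `f : V* → ℝ` has finite energy
`𝓔(f,f) = supₙ 𝓔ₙ(f,f) < ∞`, then `|f(x) − f(y)| ≤ 6 √(𝓔(f,f)) ‖x−y‖^α` on `V*`,
and `f` extends uniquely to a continuous (indeed `α`-Hölder continuous, with the
same constant) function on `V`. -/
theorem statement6 (u : Pt → ℝ) (hu : FiniteEnergy u) :
    (∀ x ∈ Vstar, ∀ y ∈ Vstar,
        |u x - u y| ≤ 6 * Real.sqrt (⨆ n : ℕ, energy n u) *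
          ‖x - y‖ ^ (Real.log (5 / 3) / Real.log 4)) ∧
    ∃ g : C(sg, ℝ),
      (∀ x : Pt, ∀ hx : x ∈ Vstar, g ⟨x, Vstar_subset_sg hx⟩ = u x) ∧
      (∀ p q : sg, |g p - g q| ≤ 6 * Real.sqrt (⨆ n : ℕ, energy n u) *
          ‖(p : Pt) - (q : Pt)‖ ^ (Real.log (5 / 3) / Real.log 4)) ∧
      ∀ g' : C(sg, ℝ), (∀ x : Pt, ∀ hx : x ∈ Vstar, g' ⟨x, Vstar_subset_sg hx⟩ = u x) →
        g' = g := by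
  have hle : ∀ n, energy n u ≤ ⨆ n : ℕ, energy n u := fun n => le_ciSup hu n
  have hE : 0 ≤ ⨆ n : ℕ, energy n u := by
    refine le_trans ?_ (hle 0)
    simpa using energy_ge u 0 ∅ (by simp)
  have hmain : ∀ x ∈ Vstar, ∀ y ∈ Vstar,
        |u x - u y| ≤ 6 * Real.sqrt (⨆ n : ℕ, energy n u) *
          ‖x - y‖ ^ (Real.log (5 / 3) / Real.log 4) :=
    fun x hx y hy => holder_main u hE hle hx hy
  refine ⟨hmain, ?_⟩
  set C := 6 * Real.sqrt (⨆ n : ℕ, energy n u) with hC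
  set α := Real.log (5 / 3) / Real.log 4 with hα
  have hα0 : 0 < α := alpha_pos
  have hC0 : 0 ≤ C := by positivity
  have hsub : Vstar ⊆ sg := subset_closure
  have hui := (isUniformEmbedding_set_inclusion hsub).isUniformInducing
  have hdr : DenseRange (Set.inclusion hsub) := (denseRange_inclusion_iff hsub).2 subset_rfl
  have huc : UniformContinuous (fun x : Vstar => u x) := by
    have hcont : Continuous fun t : ℝ => C * t ^ α :=
      continuous_const.mul (Real.continuous_rpow_const hα0.le)
    rw [Metric.uniformContinuous_iff]
    intro ε hε
    have h0 := Metric.continuous_iff.1 hcont 0 ε hε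
    obtain ⟨δ, hδ, h⟩ := h0
    refine ⟨δ, hδ, fun {x y} hxy => ?_⟩
    have h1 := h (dist x y) (by simpa [Real.dist_eq] using hxy)
    rw [Real.zero_rpow hα0.ne', mul_zero, Real.dist_eq, sub_zero] at h1
    have h2 := hmain x x.2 y y.2
    rw [Subtype.dist_eq, dist_eq_norm] at h1
    rw [Real.dist_eq]
    exact h2.trans_lt ((le_abs_self _).trans_lt h1)
  have hgc := uniformContinuous_uniformly_extend hui hdr huc
  have hge := fun b => uniformly_extend_of_ind hui hdr huc b
  set g := (hui.isDenseInducing hdr).extend (fun x : Vstar => u x) with hg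
  refine ⟨⟨g, hgc.continuous⟩, fun x hx => hge ⟨x, hx⟩, ?_, ?_⟩
  · intro p q
    refine hdr.induction_on₂ (p := fun p q : sg => |g p - g q| ≤ C * ‖(p : Pt) - (q : Pt)‖ ^ α)
      ?_ ?_ p q
    · refine isClosed_le ?_ ?_
      · exact ((hgc.continuous.comp continuous_fst).sub (hgc.continuous.comp continuous_snd)).abs
      · refine continuous_const.mul ((Real.continuous_rpow_const hα0.le).comp ?_)
        fun_prop
    · intro a b
      rw [hge, hge]
      exact hmain a a.2 b b.2
  · intro g' hg'
    ext p
    refine congrFun (hdr.equalizer g'.continuous hgc.continuous ?_) p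
    funext x
    exact (hg' x x.2).trans (hge x).symm

end
end

section
/- If f : V* → ℝ has finite energy, i.e. sup_{n≥0} 𝓔_n(f,f) < ∞, then lim_{n→∞} max_{x∈V_n} (5/3)^n Σ_{y : {x,y}∈E_n} (f(y)−f(x))² = 0; that is, the pointwise local energies of a finite-energy function vanish uniformly as n → ∞. -/
open Set MeasureTheory Filter Topology
open scoped Classical ENNReal NNReal BoundedContinuousFunction

noncomputable section

/-! ### Combinatorics of cells -/

/-- Lower-left corners (in lattice coordinates) of the level `n` cells. -/
def CF : ℕ → Finset (ℤ × ℤ)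
  | 0 => {(0, 0)}
  | n + 1 => (CF n).image (fun c => (2 * c.1, 2 * c.2)) ∪
      (CF n).image (fun c => (2 * c.1 + 1, 2 * c.2)) ∪
      (CF n).image (fun c => (2 * c.1, 2 * c.2 + 1))

lemma CF_zero (i j : ℤ) : (i, j) ∈ CF 0 ↔ i = 0 ∧ j = 0 := by
  simp [CF]

lemma CF_succ (n : ℕ) (i j : ℤ) :
    (i, j) ∈ CF (n + 1) ↔ (i / 2, j / 2) ∈ CF n ∧ ¬ (i % 2 = 1 ∧ j % 2 = 1) := by
  simp only [CF, Finset.mem_union, Finset.mem_image, Prod.exists, Prod.mk.injEq]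
  constructor
  · rintro ((⟨a, b, h, h1, h2⟩ | ⟨a, b, h, h1, h2⟩) | ⟨a, b, h, h1, h2⟩)
    all_goals
      have e1 : i / 2 = a := by omega
      have e2 : j / 2 = b := by omega
      rw [e1, e2]
      exact ⟨h, by omega⟩
  · rintro ⟨h, h1⟩
    rcases Int.emod_two_eq_zero_or_one i with hi | hi <;>
    rcases Int.emod_two_eq_zero_or_one j with hj | hj
    · exact Or.inl (Or.inl ⟨_, _, h, by omega, by omega⟩)
    · exact Or.inr ⟨_, _, h, by omega, by omega⟩
    · exact Or.inl (Or.inr ⟨_, _, h, by omega, by omega⟩)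
    · exact absurd ⟨hi, hj⟩ h1

lemma CF_bound (n : ℕ) : ∀ i j : ℤ, (i, j) ∈ CF n → 0 ≤ i ∧ 0 ≤ j ∧ i + j < 2 ^ n := by
  induction n with
  | zero => intro i j h; rw [CF_zero] at h; simp; omega
  | succ n ih =>
    intro i j h
    rw [CF_succ] at h
    have := ih _ _ h.1
    rw [pow_succ]
    omega

lemma CF_corner (n : ℕ) : ((0:ℤ), (0:ℤ)) ∈ CF n ∧ ((2:ℤ) ^ n - 1, (0:ℤ)) ∈ CF n ∧
    ((0:ℤ), (2:ℤ) ^ n - 1) ∈ CF n := by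
  induction n with
  | zero => simp [CF_zero]
  | succ n ih =>
    have e : ((2:ℤ) ^ (n+1) - 1) / 2 = 2 ^ n - 1 := by rw [pow_succ]; omega
    simp only [CF_succ, e]
    simpa using ih

lemma CF_outer (n : ℕ) : ∀ i j : ℤ, (i, j) ∈ CF (n + 1) ↔
    (i, j) ∈ CF n ∨ (i - 2 ^ n, j) ∈ CF n ∨ (i, j - 2 ^ n) ∈ CF n := by
  induction n with
  | zero => intro i j; rw [CF_succ]; simp only [CF_zero]; omega
  | succ n ih =>
    intro i j
    have e (k : ℤ) : (k - 2 ^ (n+1)) / 2 = k / 2 - 2 ^ n := by rw [pow_succ]; omega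
    have e' (k : ℤ) : (k - 2 ^ (n+1)) % 2 = k % 2 := by rw [pow_succ]; omega
    rw [CF_succ, ih, CF_succ n i j, CF_succ n (i - _) j, CF_succ n i (j - _)]
    simp only [e, e']
    tauto

/-- Lattice vertices of level `n`. -/
def VC (n : ℕ) (i j : ℤ) : Prop := (i, j) ∈ CF n ∨ (i - 1, j) ∈ CF n ∨ (i, j - 1) ∈ CF n

lemma VC_outer (n : ℕ) (i j : ℤ) : VC (n + 1) i j ↔
    VC n i j ∨ VC n (i - 2 ^ n) j ∨ VC n i (j - 2 ^ n) := by
  unfold VC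
  simp only [CF_outer n, sub_right_comm _ (1:ℤ)]
  tauto

lemma VC_two (n : ℕ) : ∀ i j : ℤ, VC n i j →
    ((i, j) ∈ CF n ∧ (i - 1, j) ∈ CF n) ∨ ((i, j) ∈ CF n ∧ (i, j - 1) ∈ CF n) ∨
    ((i - 1, j) ∈ CF n ∧ (i, j - 1) ∈ CF n) ∨
    (i = 0 ∧ j = 0) ∨ (i = 2 ^ n ∧ j = 0) ∨ (i = 0 ∧ j = 2 ^ n) := by
  induction n with
  | zero => intro i j; simp only [VC, CF_zero]; simp; omega
  | succ n ih =>
    intro i j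
    have ih := ih (i / 2) (j / 2)
    unfold VC at ih ⊢
    rw [CF_succ, CF_succ, CF_succ, pow_succ]
    rcases Int.emod_two_eq_zero_or_one i with hi | hi <;>
    rcases Int.emod_two_eq_zero_or_one j with hj | hj
    · have e1 : (i - 1) / 2 = i / 2 - 1 := by omega
      have e2 : (j - 1) / 2 = j / 2 - 1 := by omega
      have o1 : (i - 1) % 2 = 1 := by omega
      have o2 : (j - 1) % 2 = 1 := by omega
      rw [e1, e2, hi, hj, o1, o2]
      simp only [zero_ne_one, and_false, false_and, not_false_eq_true, and_true]
      intro h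
      rcases ih h with h | h | h | h
      · tauto
      · tauto
      · tauto
      · right; right; right; omega
    · have e2 : (j - 1) / 2 = j / 2 := by omega
      have o1 : (i - 1) % 2 = 1 := by omega
      have o2 : (j - 1) % 2 = 0 := by omega
      rw [e2, hi, hj, o1, o2]
      simp
      tauto
    · have e2 : (i - 1) / 2 = i / 2 := by omega
      have o1 : (i - 1) % 2 = 0 := by omega
      have o2 : (j - 1) % 2 = 1 := by omega
      rw [e2, hi, hj, o1, o2]
      simp
      tauto
    · have e1 : (i - 1) / 2 = i / 2 := by omega
      have e2 : (j - 1) / 2 = j / 2 := by omega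
      have o1 : (i - 1) % 2 = 0 := by omega
      have o2 : (j - 1) % 2 = 0 := by omega
      rw [e1, e2, hi, hj, o1, o2]
      simp
      tauto

lemma VC_bound {n : ℕ} {i j : ℤ} (h : VC n i j) : 0 ≤ i ∧ 0 ≤ j ∧ i + j ≤ 2 ^ n := by
  rcases h with h | h | h <;> have := CF_bound n _ _ h <;> omega

lemma edge1 {n : ℕ} {i j : ℤ} (hx : VC n i j) (hy : VC n (i + 1) j) (h : (i, j) ∉ CF n) :
    (i, j - 1) ∈ CF n ∧ (i + 1, j - 1) ∈ CF n := by
  have bx := VC_bound hx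
  have byy := VC_bound hy
  obtain ⟨c0, c1, c2⟩ := CF_corner n
  constructor
  · rcases VC_two n _ _ hx with h1 | h1 | h1 | h1 | h1 | h1
    · tauto
    · tauto
    · tauto
    · obtain ⟨rfl, rfl⟩ := h1; tauto
    · omega
    · omega
  · rcases VC_two n _ _ hy with h1 | h1 | h1 | h1 | h1 | h1
    · rw [add_sub_cancel_right] at h1; tauto
    · tauto
    · tauto
    · omega
    · obtain ⟨h1, rfl⟩ := h1
      obtain rfl : i = 2 ^ n - 1 := by omega
      tauto
    · omega

lemma edge2 {n : ℕ} {i j : ℤ} (hx : VC n i j) (hy : VC n i (j + 1)) (h : (i, j) ∉ CF n) :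
    (i - 1, j) ∈ CF n ∧ (i - 1, j + 1) ∈ CF n := by
  have bx := VC_bound hx
  have byy := VC_bound hy
  obtain ⟨c0, c1, c2⟩ := CF_corner n
  constructor
  · rcases VC_two n _ _ hx with h1 | h1 | h1 | h1 | h1 | h1
    · tauto
    · tauto
    · tauto
    · obtain ⟨rfl, rfl⟩ := h1; tauto
    · omega
    · omega
  · rcases VC_two n _ _ hy with h1 | h1 | h1 | h1 | h1 | h1
    · tauto
    · rw [add_sub_cancel_right] at h1; tauto
    · tauto
    · omega
    · omega
    · obtain ⟨rfl, h1⟩ := h1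
      obtain rfl : j = 2 ^ n - 1 := by omega
      tauto

lemma edge3 {n : ℕ} {i j : ℤ} (hx : VC n (i + 1) j) (hy : VC n i (j + 1)) (h : (i, j) ∉ CF n) :
    (i + 1, j) ∈ CF n ∧ (i, j + 1) ∈ CF n := by
  have bx := VC_bound hx
  have byy := VC_bound hy
  obtain ⟨c0, c1, c2⟩ := CF_corner n
  constructor
  · rcases VC_two n _ _ hx with h1 | h1 | h1 | h1 | h1 | h1
    · tauto
    · tauto
    · rw [add_sub_cancel_right] at h1; tauto
    · omega
    · obtain ⟨h1, rfl⟩ := h1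
      obtain rfl : i = 2 ^ n - 1 := by omega
      tauto
    · omega
  · rcases VC_two n _ _ hy with h1 | h1 | h1 | h1 | h1 | h1
    · tauto
    · tauto
    · rw [add_sub_cancel_right] at h1; tauto
    · omega
    · omega
    · obtain ⟨rfl, h1⟩ := h1
      obtain rfl : j = 2 ^ n - 1 := by omega
      tauto

/-! ### Geometry -/

/-- The lattice point with coordinates `(i, j)` at scale `2⁻ⁿ`. -/
def PP (n : ℕ) (i j : ℤ) : Pt :=
  (WithLp.equiv 2 (Fin 2 → ℝ)).symm
    ![((i:ℝ) + (j:ℝ) / 2) / 2 ^ n, (j:ℝ) * (Real.sqrt 3 / 2) / 2 ^ n]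

lemma PP_double (n : ℕ) (i j : ℤ) : PP (n + 1) (2 * i) (2 * j) = PP n i j := by
  unfold PP
  congr 2
  · push_cast; rw [pow_succ]; field_simp
  · congr 1; push_cast; rw [pow_succ]; field_simp

lemma sgMap0 (n : ℕ) (i j : ℤ) : sgMap 0 (PP n i j) = PP (n + 1) i j := by
  ext k
  fin_cases k <;> simp [sgMap, PP, ptA, pow_succ] <;> field_simp

lemma sgMap1 (n : ℕ) (i j : ℤ) : sgMap 1 (PP n i j) = PP (n + 1) (i + 2 ^ n) j := by
  ext k
  fin_cases k <;> simp [sgMap, PP, ptA, pow_succ] <;> field_simp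
  ring

lemma sgMap2 (n : ℕ) (i j : ℤ) : sgMap 2 (PP n i j) = PP (n + 1) i (j + 2 ^ n) := by
  ext k
  fin_cases k <;> simp [sgMap, PP, ptA, pow_succ] <;> field_simp
  ring

lemma Vn_iff (n : ℕ) : ∀ x : Pt, x ∈ Vn n ↔ ∃ i j, x = PP n i j ∧ VC n i j := by
  induction n with
  | zero =>
    intro x
    have h0 : ptA 0 = PP 0 0 0 := by ext k; fin_cases k <;> simp [PP, ptA]
    have h1 : ptA 1 = PP 0 1 0 := by ext k; fin_cases k <;> simp [PP, ptA]
    have h2 : ptA 2 = PP 0 0 1 := by ext k; fin_cases k <;> simp [PP, ptA]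
    simp only [Vn, Finset.mem_insert, Finset.mem_singleton, h0, h1, h2, VC, CF_zero]
    constructor
    · rintro (h | h | h)
      · exact ⟨_, _, h, by omega⟩
      · exact ⟨_, _, h, by omega⟩
      · exact ⟨_, _, h, by omega⟩
    · rintro ⟨i, j, rfl, h | h | h⟩
      · obtain ⟨rfl, rfl⟩ := h; tauto
      · obtain ⟨h, rfl⟩ := h
        obtain rfl : i = 1 := by omega
        tauto
      · obtain ⟨rfl, h⟩ := h
        obtain rfl : j = 1 := by omega
        tauto
  | succ n ih =>
    intro x
    simp only [Vn, Finset.mem_union, Finset.mem_image, ih]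
    constructor
    · rintro ((⟨_, ⟨i, j, rfl, h⟩, rfl⟩ | ⟨_, ⟨i, j, rfl, h⟩, rfl⟩) | ⟨_, ⟨i, j, rfl, h⟩, rfl⟩)
      · exact ⟨_, _, sgMap0 n i j, by rw [VC_outer]; tauto⟩
      · exact ⟨_, _, sgMap1 n i j, by rw [VC_outer, add_sub_cancel_right]; tauto⟩
      · exact ⟨_, _, sgMap2 n i j, by rw [VC_outer, add_sub_cancel_right]; tauto⟩
    · rintro ⟨i, j, rfl, h⟩
      rw [VC_outer] at h
      rcases h with h | h | h
      · exact Or.inl (Or.inl ⟨_, ⟨i, j, rfl, h⟩, sgMap0 n i j⟩)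
      · exact Or.inl (Or.inr ⟨_, ⟨_, j, rfl, h⟩, by rw [sgMap1, sub_add_cancel]⟩)
      · exact Or.inr ⟨_, ⟨i, _, rfl, h⟩, by rw [sgMap2, sub_add_cancel]⟩

lemma isEdge_PP (n : ℕ) (i j k l : ℤ) : isEdge n (PP n i j) (PP n k l) ↔
    (i - k) ^ 2 + (i - k) * (j - l) + (j - l) ^ 2 = 1 := by
  unfold isEdge
  have h3 : Real.sqrt 3 ^ 2 = 3 := Real.sq_sqrt (by norm_num)
  have hn : ‖PP n i j - PP n k l‖ ^ 2 =
      (((i - k) ^ 2 + (i - k) * (j - l) + (j - l) ^ 2 : ℤ) : ℝ) * ((2:ℝ) ^ (-(n:ℤ))) ^ 2 := by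
    rw [EuclideanSpace.norm_sq_eq]
    simp only [Fin.sum_univ_two, PP, Real.norm_eq_abs, sq_abs]
    simp
    field_simp
    ring_nf
    rw [h3]
    ring
  have hp : (0:ℝ) < (2:ℝ) ^ (-(n:ℤ)) := by positivity
  rw [← sq_eq_sq₀ (norm_nonneg _) hp.le, hn]
  constructor
  · intro h
    have : (((i - k) ^ 2 + (i - k) * (j - l) + (j - l) ^ 2 : ℤ) : ℝ) = 1 := by
      have hp2 := (pow_pos hp 2).ne'
      exact mul_right_cancel₀ hp2 (by rw [h, one_mul])
    exact_mod_cast this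
  · intro h
    rw [h]; simp

lemma PP_inj (n : ℕ) {i j k l : ℤ} (h : PP n i j = PP n k l) : i = k ∧ j = l := by
  have h0 := congrArg (fun v : Pt => v 0) h
  have h1 := congrArg (fun v : Pt => v 1) h
  simp [PP] at h0 h1
  subst h1
  field_simp at h0
  have h2 : (i:ℝ) = k := by linarith
  exact ⟨by exact_mod_cast h2, rfl⟩

lemma six_dirs (a b : ℤ) (h : a ^ 2 + a * b + b ^ 2 = 1) :
    (a = 1 ∧ b = 0) ∨ (a = -1 ∧ b = 0) ∨ (a = 0 ∧ b = 1) ∨ (a = 0 ∧ b = -1) ∨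
    (a = 1 ∧ b = -1) ∨ (a = -1 ∧ b = 1) := by
  have h1 : a ≤ 1 := by nlinarith [sq_nonneg (a + 2 * b)]
  have h2 : -1 ≤ a := by nlinarith [sq_nonneg (a + 2 * b)]
  have h3 : b ≤ 1 := by nlinarith [sq_nonneg (b + 2 * a)]
  have h4 : -1 ≤ b := by nlinarith [sq_nonneg (b + 2 * a)]
  interval_cases a <;> interval_cases b <;> simp_all

/-! ### Cell energies -/

/-- Unnormalised energy of a cell. -/
def QQ (u : Pt → ℝ) (n : ℕ) (c : ℤ × ℤ) : ℝ :=
  (u (PP n c.1 c.2) - u (PP n (c.1 + 1) c.2)) ^ 2 +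
  (u (PP n c.1 c.2) - u (PP n c.1 (c.2 + 1))) ^ 2 +
  (u (PP n (c.1 + 1) c.2) - u (PP n c.1 (c.2 + 1))) ^ 2

/-- Normalised cell energy. -/
def ee (u : Pt → ℝ) (n : ℕ) (c : ℤ × ℤ) : ℝ := (5 / 3 : ℝ) ^ n * QQ u n c

lemma ee_nonneg (u : Pt → ℝ) (n : ℕ) (c : ℤ × ℤ) : 0 ≤ ee u n c := by
  unfold ee QQ; positivity

/-- Total energy of the three children of a cell. -/
def ch (u : Pt → ℝ) (n : ℕ) (c : ℤ × ℤ) : ℝ :=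
  ee u (n + 1) (2 * c.1, 2 * c.2) + ee u (n + 1) (2 * c.1 + 1, 2 * c.2) +
  ee u (n + 1) (2 * c.1, 2 * c.2 + 1)

lemma alg1 (a b c x y z : ℝ) :
    (a - b) ^ 2 + (a - c) ^ 2 + (b - c) ^ 2 ≤
    5 / 3 * (((a - x) ^ 2 + (a - y) ^ 2 + (x - y) ^ 2) + ((x - b) ^ 2 + (x - z) ^ 2 + (b - z) ^ 2)
      + ((y - z) ^ 2 + (y - c) ^ 2 + (z - c) ^ 2)) := by
  obtain ⟨X, rfl⟩ : ∃ X, x = X + (2 * a + 2 * b + c) / 5 := ⟨x - (2 * a + 2 * b + c) / 5, by ring⟩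
  obtain ⟨Y, rfl⟩ : ∃ Y, y = Y + (2 * a + b + 2 * c) / 5 := ⟨y - (2 * a + b + 2 * c) / 5, by ring⟩
  obtain ⟨Z, rfl⟩ : ∃ Z, z = Z + (a + 2 * b + 2 * c) / 5 := ⟨z - (a + 2 * b + 2 * c) / 5, by ring⟩
  linarith [sq_nonneg X, sq_nonneg Y, sq_nonneg Z, sq_nonneg (X - Y), sq_nonneg (X - Z),
    sq_nonneg (Y - Z)]

lemma alg2 (a b c x y z : ℝ) :
    5 / 3 * ((a - x) ^ 2 + (a - y) ^ 2 + (x - y) ^ 2) ≤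
    4 / 5 * ((a - b) ^ 2 + (a - c) ^ 2 + (b - c) ^ 2) + 4 * (
    5 / 3 * (((a - x) ^ 2 + (a - y) ^ 2 + (x - y) ^ 2) + ((x - b) ^ 2 + (x - z) ^ 2 + (b - z) ^ 2)
      + ((y - z) ^ 2 + (y - c) ^ 2 + (z - c) ^ 2)) - ((a - b) ^ 2 + (a - c) ^ 2 + (b - c) ^ 2)) := by
  obtain ⟨X, rfl⟩ : ∃ X, x = X + (2 * a + 2 * b + c) / 5 := ⟨x - (2 * a + 2 * b + c) / 5, by ring⟩
  obtain ⟨Y, rfl⟩ : ∃ Y, y = Y + (2 * a + b + 2 * c) / 5 := ⟨y - (2 * a + b + 2 * c) / 5, by ring⟩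
  obtain ⟨Z, rfl⟩ : ∃ Z, z = Z + (a + 2 * b + 2 * c) / 5 := ⟨z - (a + 2 * b + 2 * c) / 5, by ring⟩
  obtain ⟨b, rfl⟩ : ∃ b', b = b' + a := ⟨b - a, by ring⟩
  obtain ⟨c, rfl⟩ : ∃ c', c = c' + a := ⟨c - a, by ring⟩
  linarith [sq_nonneg X, sq_nonneg Y, sq_nonneg Z, sq_nonneg (X - Y), sq_nonneg (X - Z),
    sq_nonneg (Y - Z), sq_nonneg (b - c), sq_nonneg ((2 * b + c) / 5 - 3 * X),
    sq_nonneg ((b + 2 * c) / 5 - 3 * Y), sq_nonneg ((b - c) / 5 - 3 * (X - Y))]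

lemma ch_eq (u : Pt → ℝ) (n : ℕ) (i j : ℤ) : ∃ a b c x y z : ℝ,
    ee u n (i, j) = (5 / 3 : ℝ) ^ n * ((a - b) ^ 2 + (a - c) ^ 2 + (b - c) ^ 2) ∧
    ee u (n + 1) (2 * i, 2 * j) =
      (5 / 3 : ℝ) ^ n * (5 / 3 * ((a - x) ^ 2 + (a - y) ^ 2 + (x - y) ^ 2)) ∧
    ee u (n + 1) (2 * i + 1, 2 * j) =
      (5 / 3 : ℝ) ^ n * (5 / 3 * ((x - b) ^ 2 + (x - z) ^ 2 + (b - z) ^ 2)) ∧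
    ee u (n + 1) (2 * i, 2 * j + 1) =
      (5 / 3 : ℝ) ^ n * (5 / 3 * ((y - z) ^ 2 + (y - c) ^ 2 + (z - c) ^ 2)) := by
  refine ⟨u (PP n i j), u (PP n (i + 1) j), u (PP n i (j + 1)), u (PP (n + 1) (2 * i + 1) (2 * j)),
    u (PP (n + 1) (2 * i) (2 * j + 1)), u (PP (n + 1) (2 * i + 1) (2 * j + 1)), ?_, ?_, ?_, ?_⟩
  · rfl
  all_goals
    have e (k : ℤ) : 2 * k + 1 + 1 = 2 * (k + 1) := by ring
    simp only [ee, QQ, e, PP_double, pow_succ _ n]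
    ring

lemma ee_le_ch (u : Pt → ℝ) (n : ℕ) (i j : ℤ) : ee u n (i, j) ≤ ch u n (i, j) := by
  obtain ⟨a, b, c, x, y, z, h0, h1, h2, h3⟩ := ch_eq u n i j
  simp only [ch, h0, h1, h2, h3, ← mul_add]
  gcongr
  linarith [alg1 a b c x y z]

lemma child_le (u : Pt → ℝ) (n : ℕ) (i j k l : ℤ) (hk : (k = 2 * i ∧ l = 2 * j) ∨
    (k = 2 * i + 1 ∧ l = 2 * j) ∨ (k = 2 * i ∧ l = 2 * j + 1)) :
    ee u (n + 1) (k, l) ≤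
      4 / 5 * ee u n (i, j) + 4 * (ch u n (i, j) - ee u n (i, j)) := by
  obtain ⟨a, b, c, x, y, z, h0, h1, h2, h3⟩ := ch_eq u n i j
  have ht : (0:ℝ) ≤ (5 / 3 : ℝ) ^ n := by positivity
  rcases hk with ⟨rfl, rfl⟩ | ⟨rfl, rfl⟩ | ⟨rfl, rfl⟩
  · simp only [ch, h0, h1, h2, h3]
    linarith [mul_le_mul_of_nonneg_left (alg2 a b c x y z) ht]
  · simp only [ch, h0, h1, h2, h3]
    linarith [mul_le_mul_of_nonneg_left (alg2 b a c x z y) ht]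
  · simp only [ch, h0, h1, h2, h3]
    linarith [mul_le_mul_of_nonneg_left (alg2 c a b y z x) ht]

/-- Total cell energy. -/
def SS (u : Pt → ℝ) (n : ℕ) : ℝ := ∑ c ∈ CF n, ee u n c

lemma sum_CF_succ (n : ℕ) (g : ℤ × ℤ → ℝ) : ∑ c ∈ CF (n + 1), g c =
    ∑ c ∈ CF n, (g (2 * c.1, 2 * c.2) + g (2 * c.1 + 1, 2 * c.2) + g (2 * c.1, 2 * c.2 + 1)) := by
  simp only [CF]
  rw [Finset.sum_union, Finset.sum_union, Finset.sum_image, Finset.sum_image, Finset.sum_image,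
    ← Finset.sum_add_distrib, ← Finset.sum_add_distrib]
  · rintro ⟨a, b⟩ _ ⟨c, d⟩ _ h
    simp only [Prod.mk.injEq] at h ⊢; omega
  · rintro ⟨a, b⟩ _ ⟨c, d⟩ _ h
    simp only [Prod.mk.injEq] at h ⊢; omega
  · rintro ⟨a, b⟩ _ ⟨c, d⟩ _ h
    simp only [Prod.mk.injEq] at h ⊢; omega
  · rw [Finset.disjoint_left]
    rintro ⟨a, b⟩ h1 h2
    simp only [Finset.mem_image, Prod.exists, Prod.mk.injEq] at h1 h2
    obtain ⟨_, _, _, _, _⟩ := h1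
    obtain ⟨_, _, _, _, _⟩ := h2
    omega
  · rw [Finset.disjoint_left]
    rintro ⟨a, b⟩ h1 h2
    simp only [Finset.mem_union, Finset.mem_image, Prod.exists, Prod.mk.injEq] at h1 h2
    obtain ⟨_, _, _, _, _⟩ := h2
    rcases h1 with ⟨_, _, _, _, _⟩ | ⟨_, _, _, _, _⟩ <;> omega

lemma SS_succ (u : Pt → ℝ) (n : ℕ) : SS u (n + 1) = ∑ c ∈ CF n, ch u n c :=
  sum_CF_succ n _

lemma SS_mono (u : Pt → ℝ) : Monotone (SS u) := by
  refine monotone_nat_of_le_succ fun n => ?_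
  rw [SS_succ]
  exact Finset.sum_le_sum fun c _ => ee_le_ch u n c.1 c.2

lemma gap_le (u : Pt → ℝ) (n : ℕ) (c : ℤ × ℤ) (hc : c ∈ CF n) :
    ch u n c - ee u n c ≤ SS u (n + 1) - SS u n := by
  rw [SS_succ, SS, ← Finset.sum_sub_distrib]
  exact Finset.single_le_sum (f := fun c => ch u n c - ee u n c)
    (fun c _ => sub_nonneg.2 (ee_le_ch u n c.1 c.2)) hc

lemma part_le (u : Pt → ℝ) (n : ℕ) (p q r s : ℤ)
    (hx : ∀ c ∈ CF n, VC n (c.1 + p) (c.2 + q)) (hy : ∀ c ∈ CF n, VC n (c.1 + r) (c.2 + s))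
    (h1 : (p - r) ^ 2 + (p - r) * (q - s) + (q - s) ^ 2 = 1) :
    (5 / 3 : ℝ) ^ n * ∑ c ∈ CF n,
      (u (PP n (c.1 + p) (c.2 + q)) - u (PP n (c.1 + r) (c.2 + s))) ^ 2 ≤ 2 * energy n u := by
  unfold energy energyBi
  have key : ∑ c ∈ CF n, (u (PP n (c.1 + p) (c.2 + q)) - u (PP n (c.1 + r) (c.2 + s))) ^ 2 ≤
      ∑ x ∈ Vn n, ∑ y ∈ Vn n, if isEdge n x y then (u y - u x) * (u y - u x) else 0 := by
    have nn : ∀ x y : Pt, 0 ≤ if isEdge n x y then (u y - u x) * (u y - u x) else 0 := by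
      intro x y
      split_ifs
      · exact mul_self_nonneg _
      · exact le_rfl
    calc _ ≤ ∑ c ∈ CF n, ∑ y ∈ Vn n, (if isEdge n (PP n (c.1 + p) (c.2 + q)) y then
            (u y - u (PP n (c.1 + p) (c.2 + q))) * (u y - u (PP n (c.1 + p) (c.2 + q))) else 0) := by
          refine Finset.sum_le_sum fun c hc => ?_
          refine le_trans (le_of_eq ?_) (Finset.single_le_sum (fun y _ => nn _ y)
            ((Vn_iff n (PP n (c.1 + r) (c.2 + s))).2 ⟨_, _, rfl, hy c hc⟩))
          rw [if_pos]
          · ring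
          · rw [isEdge_PP, ← h1]; ring
      _ = ∑ x ∈ (CF n).image (fun c => PP n (c.1 + p) (c.2 + q)), ∑ y ∈ Vn n,
            (if isEdge n x y then (u y - u x) * (u y - u x) else 0) := by
          rw [Finset.sum_image]
          rintro ⟨a, b⟩ _ ⟨c, d⟩ _ h
          have := PP_inj n h
          simp only [Prod.mk.injEq]
          constructor <;> linarith [this.1, this.2]
      _ ≤ _ := by
          refine Finset.sum_le_sum_of_subset_of_nonneg ?_
            (fun x _ _ => Finset.sum_nonneg fun y _ => nn x y)
          intro x hx'
          obtain ⟨c, hc, rfl⟩ := Finset.mem_image.1 hx'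
          exact (Vn_iff n _).2 ⟨_, _, rfl, hx c hc⟩
  have := mul_le_mul_of_nonneg_left key (by positivity : (0:ℝ) ≤ (5 / 3 : ℝ) ^ n)
  linarith

lemma SS_le (u : Pt → ℝ) (n : ℕ) : SS u n ≤ 6 * energy n u := by
  have v0 : ∀ c ∈ CF n, VC n (c.1 + 0) (c.2 + 0) := fun c hc => by
    left; simpa using hc
  have v1 : ∀ c ∈ CF n, VC n (c.1 + 1) (c.2 + 0) := fun c hc => by
    right; left; simpa using hc
  have v2 : ∀ c ∈ CF n, VC n (c.1 + 0) (c.2 + 1) := fun c hc => by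
    right; right; simpa using hc
  have h1 := part_le u n _ _ _ _ v0 v1 (by norm_num)
  have h2 := part_le u n _ _ _ _ v0 v2 (by norm_num)
  have h3 := part_le u n _ _ _ _ v1 v2 (by norm_num)
  simp only [add_zero] at h1 h2 h3
  simp only [SS, ee, QQ, ← Finset.mul_sum, Finset.sum_add_distrib]
  linarith

/-- Contraction with a vanishing perturbation. -/
lemma cell_small (u : Pt → ℝ) (hu : FiniteEnergy u) (ε : ℝ) (hε : 0 < ε) :
    ∃ N : ℕ, ∀ n, N ≤ n → ∀ c ∈ CF n, ee u n c ≤ ε := by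
  obtain ⟨B, hB⟩ := hu
  have hb : BddAbove (Set.range (SS u)) := by
    refine ⟨6 * B, ?_⟩
    rintro _ ⟨n, rfl⟩
    have := hB ⟨n, rfl⟩
    have := SS_le u n
    simp only at *
    linarith
  have hlim := tendsto_atTop_ciSup (SS_mono u) hb
  have hgap : Tendsto (fun n => SS u (n + 1) - SS u n) atTop (𝓝 0) := by
    simpa using ((tendsto_add_atTop_iff_nat 1).2 hlim).sub hlim
  obtain ⟨N, hN⟩ := eventually_atTop.1
    (hgap.eventually (gt_mem_nhds (by positivity : (0:ℝ) < ε / 40)))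
  have step : ∀ m : ℕ, ∀ c ∈ CF (N + m), ee u (N + m) c ≤ (4 / 5) ^ m * SS u N + ε / 2 := by
    intro m
    induction m with
    | zero =>
      intro c hc
      rw [add_zero] at hc
      have := Finset.single_le_sum (f := ee u N) (fun c _ => ee_nonneg u N c) hc
      simp only [SS, pow_zero, one_mul, add_zero]
      linarith
    | succ m ih =>
      rintro ⟨i, j⟩ hc
      have hc' := (CF_succ (N + m) i j).1 hc
      have h1 := child_le u (N + m) (i / 2) (j / 2) i j (by omega)
      have h2 := gap_le u (N + m) _ hc'.1
      have h3 := hN (N + m) (by omega)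
      have h4 := ih _ hc'.1
      rw [← add_assoc, pow_succ]
      linarith
  have hpow : Tendsto (fun m : ℕ => (4 / 5 : ℝ) ^ m * SS u N) atTop (𝓝 0) := by
    simpa using (tendsto_pow_atTop_nhds_zero_of_lt_one (r := (4 / 5 : ℝ)) (by norm_num)
      (by norm_num)).mul_const (SS u N)
  obtain ⟨M, hM⟩ := eventually_atTop.1
    (hpow.eventually (gt_mem_nhds (by positivity : (0:ℝ) < ε / 2)))
  refine ⟨N + M, fun n hn c hc => ?_⟩
  obtain ⟨m, rfl⟩ : ∃ m, n = N + m := ⟨n - N, by omega⟩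
  have := step m c hc
  have := hM m (by omega)
  linarith

lemma cell_edges (u : Pt → ℝ) (n : ℕ) (i j : ℤ) (δ : ℝ) (h : ee u n (i, j) ≤ δ) :
    (5 / 3 : ℝ) ^ n * (u (PP n i j) - u (PP n (i + 1) j)) ^ 2 ≤ δ ∧
    (5 / 3 : ℝ) ^ n * (u (PP n i j) - u (PP n i (j + 1))) ^ 2 ≤ δ ∧
    (5 / 3 : ℝ) ^ n * (u (PP n (i + 1) j) - u (PP n i (j + 1))) ^ 2 ≤ δ := by
  have ht : (0:ℝ) ≤ (5 / 3 : ℝ) ^ n := by positivity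
  have h1 := mul_nonneg ht (sq_nonneg (u (PP n i j) - u (PP n (i + 1) j)))
  have h2 := mul_nonneg ht (sq_nonneg (u (PP n i j) - u (PP n i (j + 1))))
  have h3 := mul_nonneg ht (sq_nonneg (u (PP n (i + 1) j) - u (PP n i (j + 1))))
  simp only [ee, QQ, mul_add] at h
  refine ⟨?_, ?_, ?_⟩ <;> linarith

lemma two_step (t a b p δ : ℝ) (ht : 0 ≤ t) (h1 : t * (a - p) ^ 2 ≤ δ) (h2 : t * (b - p) ^ 2 ≤ δ) :
    t * (a - b) ^ 2 ≤ 4 * δ := by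
  nlinarith [mul_nonneg ht (sq_nonneg ((a - p) + (b - p)))]

lemma edge_small (u : Pt → ℝ) (n : ℕ) (δ : ℝ) (hδ : 0 ≤ δ) (h : ∀ c ∈ CF n, ee u n c ≤ δ) (i j : ℤ) :
    (VC n i j → VC n (i + 1) j →
      (5 / 3 : ℝ) ^ n * (u (PP n i j) - u (PP n (i + 1) j)) ^ 2 ≤ 4 * δ) ∧
    (VC n i j → VC n i (j + 1) →
      (5 / 3 : ℝ) ^ n * (u (PP n i j) - u (PP n i (j + 1))) ^ 2 ≤ 4 * δ) ∧
    (VC n (i + 1) j → VC n i (j + 1) →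
      (5 / 3 : ℝ) ^ n * (u (PP n (i + 1) j) - u (PP n i (j + 1))) ^ 2 ≤ 4 * δ) := by
  have ht : (0:ℝ) ≤ (5 / 3 : ℝ) ^ n := by positivity
  by_cases hc : (i, j) ∈ CF n
  · have := cell_edges u n i j δ (h _ hc)
    refine ⟨fun _ _ => ?_, fun _ _ => ?_, fun _ _ => ?_⟩ <;> linarith [this.1, this.2.1, this.2.2]
  refine ⟨fun hx hy => ?_, fun hx hy => ?_, fun hx hy => ?_⟩
  · obtain ⟨h1, h2⟩ := edge1 hx hy hc
    have a1 := (cell_edges u n _ _ δ (h _ h1)).2.2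
    have a2 := (cell_edges u n _ _ δ (h _ h2)).2.1
    rw [sub_add_cancel] at a1 a2
    refine two_step _ _ _ (u (PP n (i + 1) (j - 1))) _ ht ?_ ?_
    · rwa [← neg_sub, neg_sq]
    · rwa [← neg_sub, neg_sq]
  · obtain ⟨h1, h2⟩ := edge2 hx hy hc
    have a1 := (cell_edges u n _ _ δ (h _ h1)).2.2
    have a2 := (cell_edges u n _ _ δ (h _ h2)).1
    rw [sub_add_cancel] at a1 a2
    refine two_step _ _ _ (u (PP n (i - 1) (j + 1))) _ ht ?_ ?_
    · exact a1
    · rwa [← neg_sub, neg_sq]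
  · obtain ⟨h1, h2⟩ := edge3 hx hy hc
    have a1 := (cell_edges u n _ _ δ (h _ h1)).2.1
    have a2 := (cell_edges u n _ _ δ (h _ h2)).1
    exact two_step _ _ _ (u (PP n (i + 1) (j + 1))) _ ht a1 a2

lemma sq_swap (a b : ℝ) : (a - b) ^ 2 = (b - a) ^ 2 := by ring

/-- The six directions. -/
def dirs : Finset (ℤ × ℤ) := {(1, 0), (-1, 0), (0, 1), (0, -1), (1, -1), (-1, 1)}

theorem statement10 (u : Pt → ℝ) (hu : FiniteEnergy u) :
    ∀ ε : ℝ, 0 < ε → ∃ N : ℕ, ∀ n : ℕ, N ≤ n → ∀ x ∈ Vn n,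
      (5 / 3 : ℝ) ^ n * (∑ y ∈ Vn n, if isEdge n x y then (u y - u x) ^ 2 else 0) < ε := by
  intro ε hε
  obtain ⟨N, hN⟩ := cell_small u hu (ε / 25) (by positivity)
  refine ⟨N, fun n hn x hx => ?_⟩
  have hcell := hN n hn
  obtain ⟨i, j, rfl, hij⟩ := (Vn_iff n x).1 hx
  rw [← Finset.sum_filter, Finset.mul_sum]
  have hsub : (Vn n).filter (fun y => isEdge n (PP n i j) y) ⊆
      dirs.image (fun d => PP n (i + d.1) (j + d.2)) := by
    intro y hy
    obtain ⟨hyV, hyE⟩ := Finset.mem_filter.1 hy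
    obtain ⟨k, l, rfl, hkl⟩ := (Vn_iff n y).1 hyV
    rw [isEdge_PP] at hyE
    refine Finset.mem_image.2 ⟨(k - i, l - j), ?_, by simp⟩
    have := six_dirs _ _ hyE
    simp only [dirs, Finset.mem_insert, Finset.mem_singleton, Prod.mk.injEq]
    omega
  have hcard : ((Vn n).filter (fun y => isEdge n (PP n i j) y)).card ≤ 6 :=
    (Finset.card_le_card hsub).trans (Finset.card_image_le.trans (by decide))
  have hle : ∀ y ∈ (Vn n).filter (fun y => isEdge n (PP n i j) y),
      (5 / 3 : ℝ) ^ n * (u y - u (PP n i j)) ^ 2 ≤ 4 * (ε / 25) := by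
    intro y hy
    obtain ⟨hyV, hyE⟩ := Finset.mem_filter.1 hy
    obtain ⟨k, l, rfl, hkl⟩ := (Vn_iff n y).1 hyV
    rw [isEdge_PP] at hyE
    have es := edge_small u n (ε / 25) (by positivity) hcell
    rcases six_dirs _ _ hyE with h | h | h | h | h | h
    · obtain rfl : i = k + 1 := by omega
      obtain rfl : j = l := by omega
      exact (es _ _).1 hkl hij
    · obtain rfl : k = i + 1 := by omega
      obtain rfl : j = l := by omega
      rw [sq_swap]; exact (es _ _).1 hij hkl
    · obtain rfl : i = k := by omega
      obtain rfl : j = l + 1 := by omega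
      exact (es _ _).2.1 hkl hij
    · obtain rfl : i = k := by omega
      obtain rfl : l = j + 1 := by omega
      rw [sq_swap]; exact (es _ _).2.1 hij hkl
    · obtain rfl : i = k + 1 := by omega
      obtain rfl : l = j + 1 := by omega
      rw [sq_swap]; exact (es _ _).2.2 hij hkl
    · obtain rfl : k = i + 1 := by omega
      obtain rfl : j = l + 1 := by omega
      exact (es _ _).2.2 hkl hij
  have hs := Finset.sum_le_card_nsmul _ _ _ hle
  rw [nsmul_eq_mul] at hs
  have hc6 : (((Vn n).filter (fun y => isEdge n (PP n i j) y)).card : ℝ) ≤ 6 := by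
    exact_mod_cast hcard
  have := mul_le_mul_of_nonneg_right hc6 (by positivity : (0:ℝ) ≤ 4 * (ε / 25))
  linarith

end
end
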